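/- Let α ∈ (0,1), β > 0, γ > 0, λ > 0, and let E^γ_{α,β}(z) = (1/Γ(γ)) Σ_{n=0}^∞ Γ(γ+n) z^n / (n! Γ(αn+β)) be the Prabhakar function. Then for Re s > 0, the Laplace transform of t ↦ t^{β−1} E^γ_{α,β}(−λ t^α) equals s^{αγ−β} / (s^α + λ)^γ, where powers of s are principal powers. -/

import Mathlib

open MeasureTheory Complex Real

/-- The Prabhakar (three-parameter Mittag-Leffler) function with real parameters. -/
noncomputable def prabhakar (α β γ : ℝ) (z : ℂ) : ℂ :=
  ((Real.Gamma γ)⁻¹ : ℝ) *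
    ∑' n : ℕ, ((Real.Gamma (γ + n) / (n.factorial * Real.Gamma (α * n + β)) : ℝ) : ℂ) * z ^ n

/-- Negative binomial series with coefficients written through the Gamma function. -/
theorem hasSum_gamma_ratio_mul_pow {γ x : ℝ} (hγ : 0 < γ) (hx : |x| < 1) :
    HasSum (fun n : ℕ ↦ Real.Gamma (γ + n) / (n.factorial * Real.Gamma γ) * x ^ n)
      (1 / (1 - x) ^ γ) := by
  have hcoeff (n : ℕ) : Ring.choose (γ + n - 1) n =
      Real.Gamma (γ + n) / (n.factorial * Real.Gamma γ) := by
    have hasc : (ascPochhammer ℝ n).eval γ = Real.Gamma (γ + n) / Real.Gamma γ := by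
      induction n with
      | zero => simp [(Real.Gamma_pos_of_pos hγ).ne']
      | succ n ih =>
        rw [ascPochhammer_succ_eval, ih, Nat.cast_succ, ← add_assoc,
          Real.Gamma_add_one (by positivity)]
        ring
    have h := Ring.factorial_nsmul_multichoose_eq_ascPochhammer γ n
    rw [Ring.multichoose_eq, Polynomial.ascPochhammer_smeval_cast,
      Polynomial.ascPochhammer_smeval_eq_eval, hasc, nsmul_eq_mul] at h
    have hn : (n.factorial : ℝ) ≠ 0 := by positivity
    have hG := (Real.Gamma_pos_of_pos hγ).ne'
    field_simp at h ⊢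
    linarith
  have h := (Real.one_div_one_sub_rpow_hasFPowerSeriesOnBall_zero γ).hasSum (y := x)
    (by simpa [enorm_eq_nnnorm, ← NNReal.coe_lt_coe] using hx)
  simpa [FormalMultilinearSeries.ofScalars, hcoeff] using h

theorem rpow_mul_exp_neg_le_Gamma {x R : ℝ} (hx : 1 ≤ x) (hR : 0 < R) :
    R ^ (x - 1) * Real.exp (-R) ≤ Real.Gamma x := by
  have hconv := Real.GammaIntegral_convergent (s := x) (by linarith)
  rw [Real.Gamma_eq_integral (by linarith), ← integral_exp_neg_Ioi R, ← integral_const_mul]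
  calc ∫ t in Set.Ioi R, R ^ (x - 1) * Real.exp (-t)
      ≤ ∫ t in Set.Ioi R, Real.exp (-t) * t ^ (x - 1) := by
        refine setIntegral_mono_on ((integrableOn_exp_neg_Ioi R).const_mul _)
          (hconv.mono_set (Set.Ioi_subset_Ioi hR.le)) measurableSet_Ioi fun t ht ↦ ?_
        rw [mul_comm]
        have : R ≤ t := (Set.mem_Ioi.1 ht).le
        gcongr
    _ ≤ ∫ t in Set.Ioi 0, Real.exp (-t) * t ^ (x - 1) := by
        refine setIntegral_mono_set hconv ?_ (Set.Ioi_subset_Ioi hR.le).eventuallyLE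
        filter_upwards [ae_restrict_mem measurableSet_Ioi] with t ht
        have := Set.mem_Ioi.1 ht
        positivity

theorem prabhakar_eq_tsum (α β γ : ℝ) (z : ℂ) :
    prabhakar α β γ z = ∑' n : ℕ,
      ((Real.Gamma (γ + n) / (n.factorial * Real.Gamma γ) / Real.Gamma (α * n + β) : ℝ) : ℂ) *
        z ^ n := by
  rw [prabhakar, ← tsum_mul_left]
  congr 1 with n
  push_cast
  ring

/-- Termwise bound behind the growth estimates of the Prabhakar function. -/
theorem prabhakar_coeff_mul_pow_le {α β γ r R : ℝ} (hγ : 0 < γ) (hr : 0 ≤ r) (hR : 0 < R) {n : ℕ}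
    (hn : 1 ≤ α * n + β) :
    Real.Gamma (γ + n) / (n.factorial * Real.Gamma γ) / Real.Gamma (α * n + β) * r ^ n ≤
      Real.exp R * R ^ (1 - β) *
        (Real.Gamma (γ + n) / (n.factorial * Real.Gamma γ) * (r / R ^ α) ^ n) := by
  have hG := Real.Gamma_pos_of_pos hγ
  have hGn : 0 < Real.Gamma (γ + n) := Real.Gamma_pos_of_pos (by positivity)
  have hlow : 0 < R ^ (α * n + β - 1) * Real.exp (-R) := by positivity
  have hinv : (Real.Gamma (α * n + β))⁻¹ ≤ (R ^ (α * n + β - 1) * Real.exp (-R))⁻¹ :=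
    inv_anti₀ hlow (rpow_mul_exp_neg_le_Gamma hn hR)
  have hpow : (R ^ (α * n + β - 1) * Real.exp (-R))⁻¹ =
      Real.exp R * R ^ (1 - β) * ((R ^ α) ^ n)⁻¹ := by
    rw [← Real.rpow_mul_natCast hR.le, ← Real.rpow_neg hR.le, mul_assoc, ← Real.rpow_add hR,
      mul_inv, ← Real.rpow_neg hR.le, ← Real.exp_neg, neg_neg, mul_comm]
    congr 2
    ring
  calc _ = Real.Gamma (γ + n) / (n.factorial * Real.Gamma γ) * r ^ n *
        (Real.Gamma (α * n + β))⁻¹ := by ring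
    _ ≤ Real.Gamma (γ + n) / (n.factorial * Real.Gamma γ) * r ^ n *
        (Real.exp R * R ^ (1 - β) * ((R ^ α) ^ n)⁻¹) := by
      rw [← hpow]
      gcongr
    _ = _ := by rw [div_pow]; ring

theorem summable_prabhakar_coeff_mul_pow {α β γ r : ℝ} (hα : 0 < α) (hγ : 0 < γ)
    (hr : 0 ≤ r) :
    Summable fun n : ℕ ↦
      ‖((Real.Gamma (γ + n) / (n.factorial * Real.Gamma γ) / Real.Gamma (α * n + β) : ℝ) : ℂ)‖ *
        r ^ n := by
  have hR : (0 : ℝ) < (r + 1) ^ α⁻¹ := by positivity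
  have hRα : ((r + 1) ^ α⁻¹) ^ α = r + 1 := Real.rpow_inv_rpow (by positivity) hα.ne'
  have hlt : |r / ((r + 1) ^ α⁻¹) ^ α| < 1 := by
    rw [hRα, abs_of_nonneg (by positivity), div_lt_one (by positivity)]
    linarith
  refine ((hasSum_gamma_ratio_mul_pow hγ hlt).summable.mul_left
    (Real.exp ((r + 1) ^ α⁻¹) * ((r + 1) ^ α⁻¹) ^ (1 - β))).of_norm_bounded_eventually_nat ?_
  have htend : Filter.Tendsto (fun n : ℕ ↦ α * n + β) Filter.atTop Filter.atTop :=
    Filter.tendsto_atTop_add_const_right _ _ (tendsto_natCast_atTop_atTop.const_mul_atTop hα)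
  filter_upwards [htend.eventually_ge_atTop 1] with n hn
  have hGn : 0 < Real.Gamma (γ + n) := Real.Gamma_pos_of_pos (by positivity)
  have hG := Real.Gamma_pos_of_pos hγ
  have hGx : 0 < Real.Gamma (α * n + β) := Real.Gamma_pos_of_pos (by linarith)
  rw [Complex.norm_real, Real.norm_of_nonneg (by positivity), Real.norm_of_nonneg (by positivity)]
  exact prabhakar_coeff_mul_pow_le hγ hr hR hn

theorem continuous_prabhakar {α β γ : ℝ} (hα : 0 < α) (hγ : 0 < γ) :
    Continuous (prabhakar α β γ) := by
  rw [funext (prabhakar_eq_tsum α β γ)]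
  refine continuous_iff_continuousAt.2 fun z ↦ ?_
  have hon := continuousOn_tsum (s := Metric.ball (0 : ℂ) (‖z‖ + 1))
    (f := fun (n : ℕ) (w : ℂ) ↦
      ((Real.Gamma (γ + n) / (n.factorial * Real.Gamma γ) / Real.Gamma (α * n + β) : ℝ) : ℂ) *
        w ^ n) (fun n ↦ by fun_prop)
    (summable_prabhakar_coeff_mul_pow (β := β) hα hγ (by positivity : 0 ≤ ‖z‖ + 1))
    (fun n w hw ↦ by
      rw [norm_mul, norm_pow]
      have : ‖w‖ ≤ ‖z‖ + 1 := by simpa using (mem_ball_zero_iff.1 hw).le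
      gcongr)
  exact hon.continuousAt (Metric.isOpen_ball.mem_nhds (by simp))

theorem summable_prabhakar {α β γ : ℝ} (hα : 0 < α) (hγ : 0 < γ) (z : ℂ) :
    Summable fun n : ℕ ↦
      ((Real.Gamma (γ + n) / (n.factorial * Real.Gamma γ) / Real.Gamma (α * n + β) : ℝ) : ℂ) *
        z ^ n := by
  refine Summable.of_norm ?_
  simpa [norm_mul, norm_pow] using
    summable_prabhakar_coeff_mul_pow (β := β) hα hγ (norm_nonneg z)

theorem prabhakar_recurrence {α β γ : ℝ} (hα : 0 < α) (hβ : 0 < β) (hγ : 0 < γ) (z : ℂ) :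
    prabhakar α β γ z = β * prabhakar α (β + 1) γ z +
      α * γ * z * prabhakar α (β + 1 + α) (γ + 1) z := by
  have hs := summable_prabhakar (β := β) hα hγ z
  have hs₁ := (summable_prabhakar (β := β + 1) hα hγ z).mul_left (β : ℂ)
  have hs₂ := (summable_prabhakar (β := β + 1 + α) hα (by positivity : 0 < γ + 1) z).mul_left
    ((α : ℂ) * γ * z)
  have hG := (Real.Gamma_pos_of_pos hγ).ne'
  simp only [prabhakar_eq_tsum]
  rw [← tsum_mul_left, ← tsum_mul_left, hs.tsum_eq_zero_add, hs₁.tsum_eq_zero_add, add_assoc,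
    ← ((summable_nat_add_iff 1).2 hs₁).tsum_add hs₂]
  congr 1
  · have h := Real.Gamma_add_one hβ.ne'
    have hGβ := (Real.Gamma_pos_of_pos hβ).ne'
    simp only [Nat.cast_zero, mul_zero, zero_add, add_zero, h]
    push_cast
    have : (Real.Gamma β : ℂ) ≠ 0 := by exact_mod_cast hGβ
    have : (β : ℂ) ≠ 0 := by exact_mod_cast hβ.ne'
    field_simp
  · congr 1 with n
    have hx : 0 < α * (n + 1 : ℕ) + β := by positivity
    have h₁ := Real.Gamma_add_one hx.ne'
    have hGx := (Real.Gamma_pos_of_pos hx).ne'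
    have e₁ : α * (n + 1 : ℕ) + (β + 1) = α * (n + 1 : ℕ) + β + 1 := by ring
    have e₂ : α * n + (β + 1 + α) = α * (n + 1 : ℕ) + β + 1 := by push_cast; ring
    have e₃ : γ + 1 + n = γ + (n + 1 : ℕ) := by push_cast; ring
    rw [e₁, e₂, e₃, h₁, Real.Gamma_add_one hγ.ne', Nat.factorial_succ, pow_succ]
    have hreal : Real.Gamma (γ + (n + 1 : ℕ)) / (((n + 1) * n.factorial : ℕ) * Real.Gamma γ) /
          Real.Gamma (α * (n + 1 : ℕ) + β) =
        β * (Real.Gamma (γ + (n + 1 : ℕ)) / (((n + 1) * n.factorial : ℕ) * Real.Gamma γ) /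
          ((α * (n + 1 : ℕ) + β) * Real.Gamma (α * (n + 1 : ℕ) + β))) +
        α * γ * (Real.Gamma (γ + (n + 1 : ℕ)) / (n.factorial * (γ * Real.Gamma γ)) /
          ((α * (n + 1 : ℕ) + β) * Real.Gamma (α * (n + 1 : ℕ) + β))) := by
      have hn : (n.factorial : ℝ) ≠ 0 := by positivity
      have hx' := hx.ne'
      generalize Real.Gamma (α * (n + 1 : ℕ) + β) = X at *
      push_cast at hx' ⊢
      field_simp
      ring
    rw [hreal, Complex.ofReal_add, Complex.ofReal_mul, Complex.ofReal_mul, Complex.ofReal_mul]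
    ring

/-- The Laplace transform of `t ↦ t ^ (β - 1) * prabhakar α β γ (-lam * t ^ α)`, in closed form. -/
noncomputable def prabhakarSymbol (α β γ lam : ℝ) (s : ℂ) : ℂ :=
  s ^ ((α * γ - β : ℝ) : ℂ) / (s ^ (α : ℂ) + (lam : ℂ)) ^ (γ : ℂ)

theorem re_cpow_ofReal_pos {α : ℝ} (hα0 : 0 < α) (hα1 : α < 1) {s : ℂ} (hs : 0 < s.re) :
    0 < (s ^ (α : ℂ)).re := by
  have hs0 : s ≠ 0 := by rintro rfl; simp at hs
  rw [Complex.cpow_ofReal_re]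
  have harg : |s.arg| < π / 2 := Complex.abs_arg_lt_pi_div_two_iff.2 (Or.inl hs)
  have hle : |s.arg * α| ≤ |s.arg| := by
    rw [abs_mul, abs_of_pos hα0]
    nlinarith [abs_nonneg s.arg]
  have hlt := abs_lt.1 (hle.trans_lt harg)
  have := Real.cos_pos_of_mem_Ioo ⟨hlt.1, hlt.2⟩
  have := norm_pos_iff.2 hs0
  positivity

theorem norm_prabhakarSymbol_le {α γ lam : ℝ} (β : ℝ) (hα0 : 0 < α) (hα1 : α < 1) (hγ : 0 < γ)
    (hlam : 0 < lam) {s : ℂ} (hs : 0 < s.re) :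
    ‖prabhakarSymbol α β γ lam s‖ ≤ ‖s‖ ^ (-β) := by
  have hs0 : s ≠ 0 := by rintro rfl; simp at hs
  have hn := norm_pos_iff.2 hs0
  have hre := re_cpow_ofReal_pos hα0 hα1 hs
  have hle : ‖s‖ ^ α ≤ ‖s ^ (α : ℂ) + lam‖ := by
    rw [← Complex.norm_cpow_real, Complex.norm_def, Complex.norm_def, Complex.normSq_apply,
      Complex.normSq_apply]
    apply Real.sqrt_le_sqrt
    simp only [Complex.add_re, Complex.ofReal_re, Complex.add_im, Complex.ofReal_im, add_zero]
    nlinarith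
  rw [prabhakarSymbol, norm_div, Complex.norm_cpow_real, Complex.norm_cpow_real]
  calc ‖s‖ ^ (α * γ - β) / ‖s ^ (α : ℂ) + lam‖ ^ γ
      ≤ ‖s‖ ^ (α * γ - β) / (‖s‖ ^ α) ^ γ := by gcongr
    _ = ‖s‖ ^ (-β) := by
      rw [← Real.rpow_mul hn.le, ← Real.rpow_sub hn]
      congr 1
      ring

theorem differentiableOn_prabhakarSymbol {α γ lam : ℝ} (β : ℝ) (hα0 : 0 < α) (hα1 : α < 1)
    (hlam : 0 < lam) :
    DifferentiableOn ℂ (prabhakarSymbol α β γ lam) {s : ℂ | 0 < s.re} := by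
  intro s hs
  have hs' : 0 < s.re := hs
  have hre := re_cpow_ofReal_pos hα0 hα1 hs'
  have hslit : s ∈ Complex.slitPlane := Or.inl hs'
  have hslit' : s ^ (α : ℂ) + lam ∈ Complex.slitPlane := by
    refine Or.inl ?_
    simp only [Complex.add_re, Complex.ofReal_re]
    positivity
  have hne : (s ^ (α : ℂ) + lam) ^ (γ : ℂ) ≠ 0 := by
    rw [Ne, Complex.cpow_eq_zero_iff]
    exact fun h ↦ Complex.slitPlane_ne_zero hslit' h.1
  apply DifferentiableAt.differentiableWithinAt
  unfold prabhakarSymbol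
  exact (differentiableAt_id.cpow_const hslit).div
    (((differentiableAt_id.cpow_const hslit).add_const _).cpow_const hslit') hne

theorem norm_vertical_rpow_le {c β : ℝ} (hc : 0 < c) (hβ : 0 < β) (y : ℝ) :
    ‖(c + y * I : ℂ)‖ ^ (-β) ≤ (c / (1 + c)) ^ (-β) * (1 + ‖y‖) ^ (-β) := by
  have h₁ : c ≤ ‖(c + y * I : ℂ)‖ := by
    simpa using (le_abs_self _).trans (Complex.abs_re_le_norm (c + y * I : ℂ))
  have h₂ : ‖y‖ ≤ ‖(c + y * I : ℂ)‖ := by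
    simpa using Complex.abs_im_le_norm (c + y * I : ℂ)
  rw [← Real.mul_rpow (by positivity) (by positivity)]
  refine Real.rpow_le_rpow_of_nonpos (by positivity) ?_ (by linarith)
  rw [div_mul_eq_mul_div, div_le_iff₀ (by positivity)]
  nlinarith

/-- A holomorphic function decaying like `‖s‖ ^ (-β)`, `1 < β`, is integrable on vertical lines. -/
theorem integrable_vertical {G : ℂ → ℂ} {c β M : ℝ} (hc : 0 < c) (hβ : 1 < β)
    (hG : ContinuousOn G {s : ℂ | 0 < s.re})
    (hbound : ∀ y : ℝ, ‖G (c + y * I)‖ ≤ M * ‖(c + y * I : ℂ)‖ ^ (-β)) (hM : 0 ≤ M) :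
    Integrable fun y : ℝ ↦ G (c + y * I) := by
  have hint : Integrable fun y : ℝ ↦ M * ((c / (1 + c)) ^ (-β) * (1 + ‖y‖) ^ (-β)) :=
    ((integrable_one_add_norm (E := ℝ) (μ := volume) (r := β) (by simpa using hβ)).const_mul
      _).const_mul _
  have hcont : Continuous fun y : ℝ ↦ G (c + y * I) :=
    hG.comp_continuous (by fun_prop) fun y ↦ by simpa using hc
  refine hint.mono' hcont.aestronglyMeasurable (.of_forall fun y ↦ (hbound y).trans ?_)
  gcongr
  exact norm_vertical_rpow_le hc (by linarith) y

/-- Shifting a vertical line of integration in the right half-plane. -/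
theorem integral_vertical_eq {G : ℂ → ℂ} {a b β M : ℝ} (ha : 0 < a) (hab : a ≤ b) (hβ : 1 < β)
    (hG : DifferentiableOn ℂ G {s : ℂ | 0 < s.re}) (hM : 0 ≤ M)
    (hbound : ∀ s : ℂ, a ≤ s.re → s.re ≤ b → ‖G s‖ ≤ M * ‖s‖ ^ (-β)) :
    ∫ y : ℝ, G (a + y * I) = ∫ y : ℝ, G (b + y * I) := by
  have hline (c : ℝ) (hac : a ≤ c) (hcb : c ≤ b) : Filter.Tendsto
      (fun T : ℝ ↦ ∫ y in (-T)..T, G (c + y * I)) Filter.atTop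
      (nhds (∫ y : ℝ, G (c + y * I))) :=
    intervalIntegral_tendsto_integral (integrable_vertical (ha.trans_le hac) hβ hG.continuousOn
      (fun y ↦ hbound _ (by simpa using hac) (by simpa using hcb)) hM)
      Filter.tendsto_neg_atTop_atBot Filter.tendsto_id
  have hdecay : Filter.Tendsto (fun T : ℝ ↦ M * T ^ (-β) * |b - a|) Filter.atTop (nhds 0) := by
    simpa using ((tendsto_rpow_neg_atTop (by linarith : 0 < β)).const_mul M).mul_const |b - a|
  have hside (ε : ℝ) (hε : |ε| = 1) : Filter.Tendsto
      (fun T : ℝ ↦ ∫ x in a..b, G (x + (ε * T : ℝ) * I)) Filter.atTop (nhds 0) := by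
    refine squeeze_zero_norm' ?_ hdecay
    filter_upwards [Filter.eventually_gt_atTop 0] with T hT
    refine intervalIntegral.norm_integral_le_of_norm_le_const fun x hx ↦ ?_
    rw [Set.uIoc_of_le hab] at hx
    refine (hbound _ (by simpa using hx.1.le) (by simpa using hx.2)).trans ?_
    refine mul_le_mul_of_nonneg_left (Real.rpow_le_rpow_of_nonpos hT ?_ (by linarith)) hM
    have := Complex.abs_im_le_norm (x + (ε * T : ℝ) * I : ℂ)
    simpa [abs_mul, hε, abs_of_pos hT] using this
  have hrect (T : ℝ) :
      (∫ x in a..b, G (x + ((-1) * T : ℝ) * I)) - (∫ x in a..b, G (x + (1 * T : ℝ) * I)) +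
        I • (∫ y in (-T)..T, G (b + y * I)) - I • (∫ y in (-T)..T, G (a + y * I)) = 0 := by
    have h := Complex.integral_boundary_rect_eq_zero_of_differentiableOn G
      (a + (-T : ℝ) * I) (b + T * I) (hG.mono fun s hs ↦ by
        have hs' := (Complex.mem_reProdIm.1 hs).1
        simp only [Complex.add_re, Complex.ofReal_re, Complex.mul_re, Complex.I_re,
          Complex.I_im, Complex.ofReal_im, mul_zero, mul_one, sub_zero, add_zero,
          Set.uIcc_of_le hab] at hs'
        exact ha.trans_le hs'.1)
    simpa using h
  have hlim := (((hside (-1) (by simp)).sub (hside 1 (by simp))).add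
    ((hline b hab le_rfl).const_smul I)).sub ((hline a le_rfl hab).const_smul I)
  have hzero := tendsto_nhds_unique (hlim.congr hrect) tendsto_const_nhds
  rw [sub_zero, zero_add, ← smul_sub, smul_eq_zero] at hzero
  exact (sub_eq_zero.1 (hzero.resolve_left Complex.I_ne_zero)).symm

/-- A Laplace transform is holomorphic on its half-plane of absolute convergence. -/
theorem differentiableOn_laplace {f : ℝ → ℂ} {c₀ : ℝ}
    (hf : AEStronglyMeasurable f (volume.restrict (Set.Ioi 0)))
    (hint : ∀ c : ℝ, c₀ < c → IntegrableOn (fun t : ℝ ↦ Real.exp (-c * t) * ‖f t‖) (Set.Ioi 0)) :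
    DifferentiableOn ℂ (fun s : ℂ ↦ ∫ t in Set.Ioi (0 : ℝ), Complex.exp (-s * t) * f t)
      {s : ℂ | c₀ < s.re} := by
  intro s hs
  have hs' : c₀ < s.re := hs
  obtain ⟨d, hd, hds⟩ : ∃ d > 0, c₀ + 3 * d = s.re := ⟨(s.re - c₀) / 3, by linarith, by ring⟩
  have hmeas (w : ℂ) : AEStronglyMeasurable (fun t : ℝ ↦ Complex.exp (-w * t) * f t)
      (volume.restrict (Set.Ioi 0)) :=
    (by fun_prop : Continuous fun t : ℝ ↦ Complex.exp (-w * t)).aestronglyMeasurable.mul hf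
  have hnorm (w : ℂ) (t : ℝ) : ‖Complex.exp (-w * t)‖ = Real.exp (-w.re * t) := by
    rw [Complex.norm_exp]
    simp
  refine (hasDerivAt_integral_of_dominated_loc_of_deriv_le
    (F' := fun w (t : ℝ) ↦ -(t : ℂ) * (Complex.exp (-w * t) * f t))
    (bound := fun t ↦ d⁻¹ * (Real.exp (-(c₀ + d) * t) * ‖f t‖))
    (Metric.ball_mem_nhds s hd) (.of_forall hmeas) ?_ ?_ ?_ ?_ ?_).2.differentiableAt
      |>.differentiableWithinAt
  · refine (hint s.re hs').mono' (hmeas s) (.of_forall fun t ↦ ?_)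
    rw [norm_mul, hnorm]
  · exact (by fun_prop : Continuous fun t : ℝ ↦ -(t : ℂ)).aestronglyMeasurable.mul (hmeas s)
  · filter_upwards [ae_restrict_mem measurableSet_Ioi] with t ht w hw
    have ht : 0 < t := ht
    have hre : c₀ + 2 * d ≤ w.re := by
      have h := (Complex.abs_re_le_norm (w - s)).trans_lt (mem_ball_iff_norm.1 hw)
      rw [Complex.sub_re, abs_lt] at h
      linarith [h.1]
    have hexp : t * Real.exp (-w.re * t) ≤ d⁻¹ * Real.exp (-(c₀ + d) * t) := by
      have h₁ : d * t ≤ Real.exp (d * t) := by linarith [Real.add_one_le_exp (d * t)]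
      have h₂ : Real.exp (-w.re * t) ≤ Real.exp (-(c₀ + 2 * d) * t) := by gcongr
      calc t * Real.exp (-w.re * t) = d⁻¹ * ((d * t) * Real.exp (-w.re * t)) := by
            field_simp
        _ ≤ d⁻¹ * (Real.exp (d * t) * Real.exp (-(c₀ + 2 * d) * t)) := by gcongr
        _ = d⁻¹ * Real.exp (-(c₀ + d) * t) := by
            rw [← Real.exp_add]
            congr 2
            ring
    rw [norm_mul, norm_mul, hnorm, norm_neg, Complex.norm_real, Real.norm_of_nonneg ht.le,
      ← mul_assoc, ← mul_assoc]
    gcongr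
  · exact (hint (c₀ + d) (by linarith)).const_mul _
  · refine .of_forall fun t w _ ↦ ?_
    have h := (((hasDerivAt_id w).neg.mul_const (t : ℂ)).cexp).mul_const (f t)
    refine h.congr_deriv ?_
    simp
    ring

/-- Termwise Laplace transformation of the Prabhakar series at large real arguments. -/
theorem laplace_prabhakar_of_lt_rpow {α β γ lam s : ℝ} (hα : 0 < α) (hβ : 0 < β) (hγ : 0 < γ)
    (hlam : 0 < lam) (hs : 0 < s) (hlt : lam < s ^ α) :
    ∫ t in Set.Ioi (0 : ℝ), Complex.exp (-(s : ℂ) * t) *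
        ((t : ℂ) ^ ((β : ℂ) - 1) * prabhakar α β γ (-(lam : ℂ) * (t : ℂ) ^ (α : ℂ))) =
      prabhakarSymbol α β γ lam s := by
  have hG := Real.Gamma_pos_of_pos hγ
  have hsα : 0 < s ^ α := by positivity
  let b : ℕ → ℝ := fun n ↦ Real.Gamma (γ + n) / (n.factorial * Real.Gamma γ)
  have hb (n : ℕ) : 0 ≤ b n := by
    have : 0 < Real.Gamma (γ + n) := Real.Gamma_pos_of_pos (by positivity)
    positivity
  have hGx (n : ℕ) : 0 < Real.Gamma (α * n + β) := Real.Gamma_pos_of_pos (by positivity)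
  let f : ℕ → ℝ → ℝ := fun n t ↦
    b n / Real.Gamma (α * n + β) * (-lam) ^ n * (t ^ (α * n + β - 1) * Real.exp (-(s * t)))
  have hfint (n : ℕ) : Integrable (f n) (volume.restrict (Set.Ioi 0)) := by
    have h := integrableOn_rpow_mul_exp_neg_mul_rpow (p := 1) (s := α * n + β - 1) (b := s)
      (by have : 0 < α * n + β := by positivity
          linarith) one_pos hs
    simp only [Real.rpow_one, neg_mul] at h
    exact h.const_mul _
  have hpow (n : ℕ) : (1 / s) ^ (α * n + β) = s ^ (-β) * ((s ^ α) ^ n)⁻¹ := by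
    rw [one_div, Real.inv_rpow hs.le, ← Real.rpow_neg hs.le, ← Real.rpow_mul_natCast hs.le,
      ← Real.rpow_neg hs.le, ← Real.rpow_add hs]
    congr 1
    ring
  have hval (n : ℕ) (x : ℝ) :
      b n / Real.Gamma (α * n + β) * x ^ n *
        ((1 / s) ^ (α * n + β) * Real.Gamma (α * n + β)) =
      s ^ (-β) * (b n * (x / s ^ α) ^ n) := by
    rw [hpow, div_pow]
    have := (hGx n).ne'
    field_simp
  have hfval (n : ℕ) : ∫ t in Set.Ioi (0 : ℝ), f n t =
      s ^ (-β) * (b n * (-lam / s ^ α) ^ n) := by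
    rw [integral_const_mul, Real.integral_rpow_mul_exp_neg_mul_Ioi (by positivity) hs, hval]
  have hfnorm (n : ℕ) : ∫ t in Set.Ioi (0 : ℝ), ‖f n t‖ =
      s ^ (-β) * (b n * (lam / s ^ α) ^ n) := by
    rw [← hval, ← Real.integral_rpow_mul_exp_neg_mul_Ioi (by positivity) hs, ← integral_const_mul]
    refine setIntegral_congr_fun measurableSet_Ioi fun t ht ↦ ?_
    have ht : 0 < t := ht
    have h₁ : 0 ≤ t ^ (α * n + β - 1) * Real.exp (-(s * t)) := by positivity
    have h₂ : 0 ≤ b n / Real.Gamma (α * n + β) := div_nonneg (hb n) (hGx n).le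
    simp only [f, norm_mul, norm_pow, norm_neg, Real.norm_of_nonneg h₂, Real.norm_of_nonneg hlam.le]
    rw [← norm_mul, Real.norm_of_nonneg h₁]
  have habs : |lam / s ^ α| < 1 := by
    rwa [abs_of_nonneg (by positivity), div_lt_one hsα]
  have hsum : HasSum (fun n ↦ ∫ t in Set.Ioi (0 : ℝ), f n t)
      (∫ t in Set.Ioi (0 : ℝ), ∑' n, f n t) :=
    hasSum_integral_of_summable_integral_norm hfint (by
      simp only [hfnorm]
      exact (hasSum_gamma_ratio_mul_pow hγ habs).summable.mul_left _)
  simp only [hfval] at hsum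
  have htotal := hsum.unique ((hasSum_gamma_ratio_mul_pow hγ
    (x := -lam / s ^ α) (by rwa [neg_div, abs_neg])).mul_left (s ^ (-β)))
  have hsymbol : prabhakarSymbol α β γ lam s =
      ((s ^ (-β) * (1 / (1 - -lam / s ^ α) ^ γ) : ℝ) : ℂ) := by
    have h : s ^ (-β) * (1 / (1 - -lam / s ^ α) ^ γ) = s ^ (α * γ - β) / (s ^ α + lam) ^ γ := by
      have e : 1 - -lam / s ^ α = (s ^ α + lam) / s ^ α := by field_simp; ring
      rw [e, Real.div_rpow (by positivity) hsα.le, one_div_div, ← Real.rpow_mul hs.le,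
        ← mul_div_assoc, ← Real.rpow_add hs]
      congr 2
      ring
    rw [h, prabhakarSymbol, Complex.ofReal_div, Complex.ofReal_cpow hs.le,
      Complex.ofReal_cpow (by positivity), Complex.ofReal_add, Complex.ofReal_cpow hs.le]
  rw [hsymbol, ← htotal, ← integral_complex_ofReal]
  refine setIntegral_congr_fun measurableSet_Ioi fun t ht ↦ ?_
  have ht : 0 < t := ht
  simp only [prabhakar_eq_tsum]
  rw [← tsum_mul_left, ← tsum_mul_left, Complex.ofReal_tsum]
  congr 1 with n
  have e₁ : (t : ℂ) ^ ((β : ℂ) - 1) = ((t ^ (β - 1) : ℝ) : ℂ) := by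
    rw [Complex.ofReal_cpow ht.le]
    push_cast
    rfl
  have e₂ : -(lam : ℂ) * (t : ℂ) ^ (α : ℂ) = ((-lam * t ^ α : ℝ) : ℂ) := by
    rw [Complex.ofReal_mul, Complex.ofReal_cpow ht.le, Complex.ofReal_neg]
  have e₃ : Complex.exp (-(s : ℂ) * t) = ((Real.exp (-(s * t)) : ℝ) : ℂ) := by
    push_cast
    congr 1
    ring
  have e₄ : t ^ (α * n + β - 1) = t ^ (β - 1) * (t ^ α) ^ n := by
    rw [← Real.rpow_mul_natCast ht.le, ← Real.rpow_add ht]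
    congr 1
    ring
  rw [e₁, e₂, e₃]
  simp only [f, b, e₄]
  push_cast
  ring

/-- The function `t ↦ t ^ (β - 1) * prabhakar α β γ (-lam * t ^ α)`. -/
noncomputable def prabhakarKernel (α β γ lam t : ℝ) : ℂ :=
  (t : ℂ) ^ ((β : ℂ) - 1) * prabhakar α β γ (-(lam : ℂ) * (t : ℂ) ^ (α : ℂ))

theorem continuousAt_prabhakarKernel {α β γ lam t : ℝ} (hα : 0 < α) (hγ : 0 < γ) (ht : 0 < t) :
    ContinuousAt (prabhakarKernel α β γ lam) t := by
  have hpow (w : ℂ) : ContinuousAt (fun t : ℝ ↦ (t : ℂ) ^ w) t :=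
    (Complex.continuous_ofReal.continuousAt (x := t)).cpow continuousAt_const
      (Or.inl (by simpa using ht))
  exact (hpow _).mul ((continuous_prabhakar hα hγ).continuousAt.comp
    (continuousAt_const.mul (hpow _)))

theorem aestronglyMeasurable_prabhakarKernel {α β γ lam : ℝ} (hα : 0 < α) (hγ : 0 < γ) :
    AEStronglyMeasurable (prabhakarKernel α β γ lam) (volume.restrict (Set.Ioi 0)) :=
  ContinuousOn.aestronglyMeasurable
    (fun _ ht ↦ (continuousAt_prabhakarKernel hα hγ ht).continuousWithinAt) measurableSet_Ioi

theorem norm_prabhakarKernel {α β γ lam t : ℝ} (ht : 0 < t) :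
    ‖prabhakarKernel α β γ lam t‖ =
      t ^ (β - 1) * ‖prabhakar α β γ (-(lam : ℂ) * (t : ℂ) ^ (α : ℂ))‖ := by
  rw [prabhakarKernel, norm_mul, Complex.norm_cpow_eq_rpow_re_of_pos ht]
  simp

/-- The Laplace transform has the closed form wherever it converges absolutely. -/
theorem laplace_prabhakarKernel_of_integrableOn {α β γ lam c₀ : ℝ} (hα0 : 0 < α) (hα1 : α < 1)
    (hβ : 0 < β) (hγ : 0 < γ) (hlam : 0 < lam) (hc₀ : 0 ≤ c₀)
    (hint : ∀ c : ℝ, c₀ < c →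
      IntegrableOn (fun t : ℝ ↦ Real.exp (-c * t) * ‖prabhakarKernel α β γ lam t‖) (Set.Ioi 0))
    {s : ℂ} (hs : c₀ < s.re) :
    ∫ t in Set.Ioi (0 : ℝ), Complex.exp (-s * t) * prabhakarKernel α β γ lam t =
      prabhakarSymbol α β γ lam s := by
  have hopen : IsOpen {s : ℂ | c₀ < s.re} := isOpen_lt continuous_const Complex.continuous_re
  have hL := (differentiableOn_laplace (aestronglyMeasurable_prabhakarKernel hα0 hγ)
    hint).analyticOnNhd hopen
  have hR := ((differentiableOn_prabhakarSymbol (γ := γ) β hα0 hα1 hlam).mono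
    fun w (hw : c₀ < w.re) ↦ hc₀.trans_lt hw).analyticOnNhd hopen
  have hconn : IsPreconnected {s : ℂ | c₀ < s.re} :=
    (convex_halfSpace_re_gt c₀).isPreconnected
  obtain ⟨S, hS₀, hSlam⟩ : ∃ S : ℝ, c₀ < S ∧ lam < S ^ α :=
    ((Filter.eventually_gt_atTop c₀).and
      ((tendsto_rpow_atTop hα0).eventually_gt_atTop lam)).exists
  have htend : Filter.Tendsto (fun x : ℝ ↦ (x : ℂ)) (nhdsWithin S (Set.Ioi S))
      (nhdsWithin (S : ℂ) {(S : ℂ)}ᶜ) :=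
    tendsto_nhdsWithin_iff.2 ⟨Complex.continuous_ofReal.continuousAt.mono_left
      nhdsWithin_le_nhds, by
        filter_upwards [self_mem_nhdsWithin] with x hx
        simpa using (Set.mem_Ioi.1 hx).ne'⟩
  have hS : 0 < S := hc₀.trans_lt hS₀
  refine hL.eqOn_of_preconnected_of_frequently_eq hR hconn (z₀ := (S : ℂ)) (by simpa using hS₀)
    (htend.frequently (Filter.Eventually.frequently ?_)) hs
  filter_upwards [self_mem_nhdsWithin] with x hx
  have hx : S < x := hx
  exact laplace_prabhakar_of_lt_rpow hα0 hβ hγ hlam (hS.trans hx)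
    (hSlam.trans_le (by gcongr))

theorem exists_norm_prabhakarKernel_le_exp {α β γ lam : ℝ} (hα : 0 < α) (hβ : 1 ≤ β)
    (hγ : 0 < γ) (hlam : 0 < lam) :
    ∃ M > 0, ∃ C, ∀ t : ℝ, 0 < t → ‖prabhakarKernel α β γ lam t‖ ≤ C * Real.exp (M * t) := by
  have hM : 0 < (lam + 1) ^ α⁻¹ := by positivity
  have hMα : ((lam + 1) ^ α⁻¹) ^ α = lam + 1 := Real.rpow_inv_rpow (by positivity) hα.ne'
  set M := (lam + 1) ^ α⁻¹
  have hsum := hasSum_gamma_ratio_mul_pow (x := lam / (lam + 1)) hγ (by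
    rw [abs_of_nonneg (by positivity), div_lt_one (by positivity)]
    linarith)
  refine ⟨M, hM, M ^ (1 - β) * (1 / (1 - lam / (lam + 1)) ^ γ), fun t ht ↦ ?_⟩
  have hratio : lam * t ^ α / (M * t) ^ α = lam / (lam + 1) := by
    rw [Real.mul_rpow hM.le ht.le, hMα, mul_div_mul_right _ _ (by positivity)]
  have hE : ‖prabhakar α β γ (-(lam : ℂ) * (t : ℂ) ^ (α : ℂ))‖ ≤
      Real.exp (M * t) * (M * t) ^ (1 - β) * (1 / (1 - lam / (lam + 1)) ^ γ) := by
    rw [prabhakar_eq_tsum]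
    refine tsum_of_norm_bounded (hsum.mul_left _) fun n ↦ ?_
    have hGn : 0 < Real.Gamma (γ + n) := Real.Gamma_pos_of_pos (by positivity)
    have hG := Real.Gamma_pos_of_pos hγ
    have hx : 1 ≤ α * n + β := by
      have : 0 ≤ α * n := by positivity
      linarith
    have hGx : 0 < Real.Gamma (α * n + β) := Real.Gamma_pos_of_pos (by linarith)
    have h := prabhakar_coeff_mul_pow_le (r := lam * t ^ α) (R := M * t) hγ (by positivity)
      (by positivity) hx
    rw [hratio] at h
    rw [norm_mul, norm_pow, norm_mul, norm_neg, Complex.norm_real, Complex.norm_real,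
      Complex.norm_cpow_eq_rpow_re_of_pos ht, Complex.ofReal_re, Real.norm_of_nonneg hlam.le,
      Real.norm_of_nonneg (by positivity)]
    exact h
  rw [norm_prabhakarKernel ht]
  calc _ ≤ t ^ (β - 1) *
        (Real.exp (M * t) * (M * t) ^ (1 - β) * (1 / (1 - lam / (lam + 1)) ^ γ)) := by gcongr
    _ = (t ^ (β - 1) * t ^ (1 - β)) *
        (M ^ (1 - β) * (1 / (1 - lam / (lam + 1)) ^ γ) * Real.exp (M * t)) := by
      rw [Real.mul_rpow hM.le ht.le]
      ring
    _ = _ := by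
      rw [← Real.rpow_add ht]
      simp

/-- Inversion of the Laplace transform far to the right. -/
theorem prabhakarKernel_eq_integral_vertical {α β γ lam M C c : ℝ} (hα0 : 0 < α) (hα1 : α < 1)
    (hβ : 1 < β) (hγ : 0 < γ) (hlam : 0 < lam) (hM : 0 ≤ M)
    (hC : ∀ t : ℝ, 0 < t → ‖prabhakarKernel α β γ lam t‖ ≤ C * Real.exp (M * t)) (hc : M < c)
    {t : ℝ} (ht : 0 < t) :
    prabhakarKernel α β γ lam t = ((2 * π)⁻¹ : ℝ) •
      ∫ y : ℝ, Complex.exp ((c + y * I) * t) * prabhakarSymbol α β γ lam (c + y * I) := by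
  have hmeas := aestronglyMeasurable_prabhakarKernel (β := β) (lam := lam) hα0 hγ
  have hint (d : ℝ) (hd : M < d) :
      IntegrableOn (fun t : ℝ ↦ Real.exp (-d * t) * ‖prabhakarKernel α β γ lam t‖)
        (Set.Ioi 0) := by
    refine ((integrableOn_exp_mul_Ioi (a := -(d - M)) (by linarith) 0).const_mul C).mono'
      ((by fun_prop : Continuous fun t : ℝ ↦ Real.exp (-d * t)).aestronglyMeasurable.mul
        hmeas.norm) ?_
    filter_upwards [ae_restrict_mem measurableSet_Ioi] with u hu
    rw [norm_mul, norm_norm, Real.norm_of_nonneg (Real.exp_pos _).le]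
    calc _ ≤ Real.exp (-d * u) * (C * Real.exp (M * u)) := by gcongr; exact hC u hu
      _ = C * Real.exp (-(d - M) * u) := by
        rw [mul_left_comm, ← Real.exp_add]
        congr 2
        ring
  have hlaplace {s : ℂ} (hs : M < s.re) := laplace_prabhakarKernel_of_integrableOn hα0 hα1
    (by linarith) hγ hlam hM hint hs
  have hc0 : 0 < c := hM.trans_lt hc
  let h : ℝ → ℂ := (Set.Ioi (0 : ℝ)).indicator fun u ↦
    Complex.exp (-(c : ℂ) * u) * prabhakarKernel α β γ lam u
  have hh : Integrable h := by
    refine IntegrableOn.integrable_indicator ?_ measurableSet_Ioi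
    refine (hint c hc).mono' ((by fun_prop : Continuous fun u : ℝ ↦
      Complex.exp (-(c : ℂ) * u)).aestronglyMeasurable.mul hmeas) (.of_forall fun u ↦ ?_)
    rw [norm_mul, Complex.norm_exp]
    simp
  have hfourier : FourierTransform.fourier h =
      fun w : ℝ ↦ prabhakarSymbol α β γ lam (c + (2 * π * w : ℝ) * I) := by
    ext w
    rw [Real.fourier_real_eq_integral_exp_smul, ← hlaplace (by simpa using hc),
      ← integral_indicator measurableSet_Ioi]
    congr 1 with u
    by_cases hu : u ∈ Set.Ioi (0 : ℝ)
    · simp only [h, Set.indicator_of_mem hu, smul_eq_mul]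
      rw [← mul_assoc, ← Complex.exp_add]
      congr 2
      push_cast
      ring
    · simp [h, Set.indicator_of_notMem hu]
  have hsymint : Integrable fun y : ℝ ↦ prabhakarSymbol α β γ lam (c + y * I) :=
    integrable_vertical hc0 hβ (differentiableOn_prabhakarSymbol β hα0 hα1 hlam).continuousOn
      (fun y ↦ by
        rw [one_mul]
        exact norm_prabhakarSymbol_le β hα0 hα1 hγ hlam (by simpa using hc0)) zero_le_one
  have hfint : Integrable (FourierTransform.fourier h) := by
    rw [hfourier]
    exact hsymint.comp_mul_left' (by positivity)
  have hcont : ContinuousAt h t := by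
    have : ContinuousAt (fun u : ℝ ↦ Complex.exp (-(c : ℂ) * u) *
        prabhakarKernel α β γ lam u) t :=
      (by fun_prop : Continuous fun u : ℝ ↦ Complex.exp (-(c : ℂ) * u)).continuousAt.mul
        (continuousAt_prabhakarKernel hα0 hγ ht)
    refine this.congr ?_
    filter_upwards [isOpen_Ioi.mem_nhds ht] with u hu
    simp only [h, Set.indicator_of_mem hu]
  have hinv := hh.fourierInv_fourier_eq hfint hcont
  rw [hfourier, Real.fourierInv_eq'] at hinv
  have hht : h t = Complex.exp (-(c : ℂ) * t) * prabhakarKernel α β γ lam t :=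
    Set.indicator_of_mem ht _
  have hk : prabhakarKernel α β γ lam t = Complex.exp ((c : ℂ) * t) * h t := by
    rw [hht, ← mul_assoc, ← Complex.exp_add]
    simp
  rw [hk, ← hinv, ← integral_const_mul]
  have hscale := Measure.integral_comp_mul_left
    (fun y : ℝ ↦ Complex.exp ((c + y * I) * t) * prabhakarSymbol α β γ lam (c + y * I)) (2 * π)
  rw [abs_of_pos (by positivity)] at hscale
  rw [← hscale]
  congr 1 with w
  rw [smul_eq_mul, ← mul_assoc, ← Complex.exp_add]
  congr 2
  simp
  ring

/-- Every positive exponential rate dominates the kernel when `1 < β`. -/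
theorem exists_norm_prabhakarKernel_le_exp_of_pos {α β γ lam a : ℝ} (hα0 : 0 < α) (hα1 : α < 1)
    (hβ : 1 < β) (hγ : 0 < γ) (hlam : 0 < lam) (ha : 0 < a) :
    ∃ C ≥ 0, ∀ t : ℝ, 0 < t → ‖prabhakarKernel α β γ lam t‖ ≤ C * Real.exp (a * t) := by
  obtain ⟨M, hM, C, hC⟩ := exists_norm_prabhakarKernel_le_exp hα0 hβ.le hγ hlam
  refine ⟨(2 * π)⁻¹ * ∫ y : ℝ, ‖prabhakarSymbol α β γ lam (a + y * I)‖, by positivity,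
    fun t ht ↦ ?_⟩
  have hac : a ≤ M + a := by linarith
  have hsym := differentiableOn_prabhakarSymbol (γ := γ) β hα0 hα1 hlam
  have hshift := integral_vertical_eq
    (G := fun s ↦ Complex.exp (s * t) * prabhakarSymbol α β γ lam s)
    (M := Real.exp ((M + a) * t)) ha hac hβ
    ((by fun_prop : Differentiable ℂ fun s : ℂ ↦ Complex.exp (s * t)).differentiableOn.mul hsym)
    (Real.exp_pos _).le fun s hs₁ hs₂ ↦ by
      rw [norm_mul, Complex.norm_exp]
      refine mul_le_mul (Real.exp_le_exp.2 ?_)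
        (norm_prabhakarSymbol_le β hα0 hα1 hγ hlam (ha.trans_le hs₁)) (norm_nonneg _)
        (Real.exp_pos _).le
      simpa using mul_le_mul_of_nonneg_right hs₂ ht.le
  rw [prabhakarKernel_eq_integral_vertical hα0 hα1 hβ hγ hlam hM.le hC
    (by linarith : M < M + a) ht, ← hshift, norm_smul, Real.norm_of_nonneg (by positivity),
    mul_assoc]
  gcongr
  refine (norm_integral_le_integral_norm _).trans_eq ?_
  rw [← integral_mul_const]
  congr 1 with y
  rw [norm_mul, Complex.norm_exp, mul_comm]
  simp

theorem integrableOn_exp_mul_norm_prabhakarKernel {α β γ lam c : ℝ} (hα0 : 0 < α) (hα1 : α < 1)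
    (hβ : 0 < β) (hγ : 0 < γ) (hlam : 0 < lam) (hc : 0 < c) :
    IntegrableOn (fun t : ℝ ↦ Real.exp (-c * t) * ‖prabhakarKernel α β γ lam t‖)
      (Set.Ioi 0) := by
  obtain ⟨C₁, hC₁0, hC₁⟩ := exists_norm_prabhakarKernel_le_exp_of_pos (β := β + 1) hα0 hα1
    (by linarith) hγ hlam (half_pos hc)
  obtain ⟨C₂, hC₂0, hC₂⟩ := exists_norm_prabhakarKernel_le_exp_of_pos (β := β + 1 + α)
    (γ := γ + 1) hα0 hα1 (by linarith) (by linarith) hlam (half_pos hc)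
  obtain ⟨K, hK⟩ := (isCompact_closedBall (0 : ℂ) lam).exists_bound_of_continuousOn
    (continuous_prabhakar (β := β) hα0 hγ).continuousOn
  have hnear (t : ℝ) (ht : 0 < t) (ht1 : t ≤ 1) :
      ‖prabhakarKernel α β γ lam t‖ ≤ K * t ^ (β - 1) := by
    rw [norm_prabhakarKernel ht, mul_comm]
    gcongr
    apply hK
    rw [mem_closedBall_zero_iff, norm_mul, norm_neg, Complex.norm_real,
      Complex.norm_cpow_eq_rpow_re_of_pos ht, Complex.ofReal_re, Real.norm_of_nonneg hlam.le]
    exact mul_le_of_le_one_right hlam.le (Real.rpow_le_one ht.le ht1 hα0.le)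
  have hfar (t : ℝ) (ht1 : 1 ≤ t) :
      ‖prabhakarKernel α β γ lam t‖ ≤
        (β * C₁ + α * γ * lam * C₂) * Real.exp (c / 2 * t) := by
    have ht : 0 < t := by linarith
    have h₁ := hC₁ t ht
    have h₂ := hC₂ t ht
    rw [norm_prabhakarKernel ht] at h₁ h₂ ⊢
    rw [prabhakar_recurrence hα0 hβ hγ]
    set E₁ := prabhakar α (β + 1) γ (-(lam : ℂ) * (t : ℂ) ^ (α : ℂ))
    set E₂ := prabhakar α (β + 1 + α) (γ + 1) (-(lam : ℂ) * (t : ℂ) ^ (α : ℂ))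
    have hnorm : ‖β * E₁ + α * γ * (-(lam : ℂ) * (t : ℂ) ^ (α : ℂ)) * E₂‖ ≤
        β * ‖E₁‖ + α * γ * lam * t ^ α * ‖E₂‖ := by
      refine (norm_add_le _ _).trans_eq ?_
      simp only [norm_mul, norm_neg, Complex.norm_real, Complex.norm_cpow_eq_rpow_re_of_pos ht,
        Complex.ofReal_re, Real.norm_of_nonneg hlam.le, Real.norm_of_nonneg hβ.le,
        Real.norm_of_nonneg hα0.le, Real.norm_of_nonneg hγ.le]
      ring
    have hp₁ : t ^ (β - 1) ≤ t ^ (β + 1 - 1) := Real.rpow_le_rpow_of_exponent_le ht1 (by linarith)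
    have hp₂ : t ^ (β - 1) * t ^ α ≤ t ^ (β + 1 + α - 1) := by
      rw [← Real.rpow_add ht]
      exact Real.rpow_le_rpow_of_exponent_le ht1 (by linarith)
    calc _ ≤ t ^ (β - 1) * (β * ‖E₁‖ + α * γ * lam * t ^ α * ‖E₂‖) := by gcongr
      _ = β * (t ^ (β - 1) * ‖E₁‖) + α * γ * lam * ((t ^ (β - 1) * t ^ α) * ‖E₂‖) := by ring
      _ ≤ β * (t ^ (β + 1 - 1) * ‖E₁‖) + α * γ * lam * (t ^ (β + 1 + α - 1) * ‖E₂‖) := by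
        gcongr
      _ ≤ β * (C₁ * Real.exp (c / 2 * t)) + α * γ * lam * (C₂ * Real.exp (c / 2 * t)) := by
        gcongr
      _ = _ := by ring
  have hmeas : AEStronglyMeasurable
      (fun t : ℝ ↦ Real.exp (-c * t) * ‖prabhakarKernel α β γ lam t‖)
      (volume.restrict (Set.Ioi 0)) :=
    (by fun_prop : Continuous fun t : ℝ ↦ Real.exp (-c * t)).aestronglyMeasurable.mul
      (aestronglyMeasurable_prabhakarKernel hα0 hγ).norm
  rw [← Set.Ioc_union_Ioi_eq_Ioi zero_le_one]
  refine IntegrableOn.union ?_ ?_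
  · have hpow : IntegrableOn (fun t : ℝ ↦ K * t ^ (β - 1)) (Set.Ioc 0 1) :=
      ((intervalIntegrable_iff_integrableOn_Ioc_of_le zero_le_one).1
        (intervalIntegral.intervalIntegrable_rpow' (by linarith))).const_mul K
    refine hpow.mono' (hmeas.mono_set Set.Ioc_subset_Ioi_self) ?_
    filter_upwards [ae_restrict_mem measurableSet_Ioc] with t ht
    rw [norm_mul, norm_norm, Real.norm_of_nonneg (Real.exp_pos _).le]
    refine (mul_le_of_le_one_left (norm_nonneg _) (Real.exp_le_one_iff.2 ?_)).trans
      (hnear t ht.1 ht.2)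
    nlinarith [ht.1]
  · refine ((integrableOn_exp_mul_Ioi (a := -(c / 2)) (by linarith) 1).const_mul
      (β * C₁ + α * γ * lam * C₂)).mono' (hmeas.mono_set (Set.Ioi_subset_Ioi zero_le_one)) ?_
    filter_upwards [ae_restrict_mem measurableSet_Ioi] with t ht
    rw [norm_mul, norm_norm, Real.norm_of_nonneg (Real.exp_pos _).le]
    calc _ ≤ Real.exp (-c * t) * ((β * C₁ + α * γ * lam * C₂) * Real.exp (c / 2 * t)) := by
          gcongr
          exact hfar t (Set.mem_Ioi.1 ht).le
      _ = _ := by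
        rw [mul_left_comm, ← Real.exp_add]
        congr 2
        ring

theorem stmt_9 (α β γ lam : ℝ) (hα0 : 0 < α) (hα1 : α < 1) (hβ : 0 < β) (hγ : 0 < γ)
    (hlam : 0 < lam) :
    ∀ s : ℂ, 0 < s.re →
      ∫ t in Set.Ioi (0 : ℝ),
          Complex.exp (-s * t) * (t : ℂ) ^ ((β : ℂ) - 1) *
            prabhakar α β γ (-(lam : ℂ) * (t : ℂ) ^ (α : ℂ)) =
        s ^ ((α * γ - β : ℝ) : ℂ) / (s ^ (α : ℂ) + (lam : ℂ)) ^ (γ : ℂ) := by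
  intro s hs
  simp only [mul_assoc]
  exact laplace_prabhakarKernel_of_integrableOn hα0 hα1 hβ hγ hlam le_rfl
    (fun c hc ↦ integrableOn_exp_mul_norm_prabhakarKernel hα0 hα1 hβ hγ hlam hc) hs
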